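/- Let G be a connected undirected simple graph on n ≥ 2 vertices with m edges, degree matrix D, Laplacian L = D − A, and normalized Laplacian 𝓛 = D^{-1/2} L D^{-1/2}. Let L† be the Moore–Penrose pseudoinverse of L and 𝓛† the Moore–Penrose pseudoinverse of 𝓛. Then 𝓛† = (I − (1/(2m)) D^{1/2} 𝟏 𝟏ᵀ D^{1/2}) · D^{1/2} L† D^{1/2} · (I − (1/(2m)) D^{1/2} 𝟏 𝟏ᵀ D^{1/2}), where 𝟏 is the all-ones vector. -/

import Mathlib

open Matrix

/-- identity relating `𝓛†` and `L†`, basis of AppRWC.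
For a connected simple graph on `n ≥ 2` vertices with `m` edges,
`𝓛† = (I - (1/(2m)) D^{1/2}𝟏𝟏ᵀD^{1/2}) D^{1/2} L† D^{1/2}
      (I - (1/(2m)) D^{1/2}𝟏𝟏ᵀD^{1/2})`. -/
theorem stmt_12
    (n : ℕ) (hn : 2 ≤ n)
    (G : SimpleGraph (Fin n)) [DecidableRel G.Adj] (hG : G.Connected)
    (m : ℕ) (hm : m = G.edgeFinset.card)
    (A D Dh Dhi L NL Ld NLd J : Matrix (Fin n) (Fin n) ℝ)
    (hA : A = G.adjMatrix ℝ)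
    (hD : D = Matrix.diagonal fun i => (G.degree i : ℝ))
    (hDh : Dh = Matrix.diagonal fun i => Real.sqrt (G.degree i))
    (hDhi : Dhi = Matrix.diagonal fun i => (Real.sqrt (G.degree i))⁻¹)
    (hL : L = D - A)
    (hNL : NL = Dhi * L * Dhi)
    (hJ : J = Matrix.of fun _ _ => (1 : ℝ))
    (hLd1 : L * Ld * L = L) (hLd2 : Ld * L * Ld = Ld)
    (hLd3 : (L * Ld)ᵀ = L * Ld) (hLd4 : (Ld * L)ᵀ = Ld * L)
    (hNLd1 : NL * NLd * NL = NL) (hNLd2 : NLd * NL * NLd = NLd)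
    (hNLd3 : (NL * NLd)ᵀ = NL * NLd) (hNLd4 : (NLd * NL)ᵀ = NLd * NL) :
    NLd = (1 - (1 / (2 * (m : ℝ))) • (Dh * J * Dh)) * (Dh * Ld * Dh) *
      (1 - (1 / (2 * (m : ℝ))) • (Dh * J * Dh)) := by
  have : Nontrivial (Fin n) := Fin.nontrivial_iff_two_le.mpr hn
  have hdeg : ∀ i, (0 : ℝ) < G.degree i := fun i => by
    exact_mod_cast hG.preconnected.degree_pos_of_nontrivial i
  have hsq : ∀ i, (0 : ℝ) < Real.sqrt (G.degree i) := fun i => Real.sqrt_pos.mpr (hdeg i)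
  have hsum : ∑ i, (G.degree i : ℝ) = 2 * (m : ℝ) := by
    rw [hm]; exact_mod_cast G.sum_degrees_eq_twice_card_edges
  have hmpos : (0 : ℝ) < 2 * (m : ℝ) := by
    rw [← hsum]
    exact Finset.sum_pos (fun i _ => hdeg i) ⟨⟨0, by omega⟩, Finset.mem_univ _⟩
  have hLlap : L = G.lapMatrix ℝ := by
    rw [hL, hD, hA]; rfl
  have hLs : Lᵀ = L := by rw [hLlap]; exact SimpleGraph.isSymm_lapMatrix (R := ℝ) G
  have hDhDhi : Dh * Dhi = 1 := by
    rw [hDh, hDhi, diagonal_mul_diagonal, ← diagonal_one]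
    congr 1; funext i; exact mul_inv_cancel₀ (hsq i).ne'
  have hDhiDh : Dhi * Dh = 1 := by
    rw [hDh, hDhi, diagonal_mul_diagonal, ← diagonal_one]
    congr 1; funext i; exact inv_mul_cancel₀ (hsq i).ne'
  have hDhs : Dhᵀ = Dh := by rw [hDh, diagonal_transpose]
  have hDhis : Dhiᵀ = Dhi := by rw [hDhi, diagonal_transpose]
  have hJs : Jᵀ = J := by rw [hJ]; rfl
  have hNLs : NLᵀ = NL := by
    rw [hNL]; simp only [transpose_mul, hDhis, hLs, Matrix.mul_assoc]
  have hLJ : L * J = 0 := by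
    ext i j
    have h := congrFun (G.lapMatrix_mulVec_const_eq_zero (R := ℝ)) i
    rw [hLlap, hJ]
    simpa [Matrix.mul_apply, Matrix.mulVec, dotProduct] using h
  have hJDJ : J * (Dh * (Dh * J)) = (2 * (m : ℝ)) • J := by
    rw [← Matrix.mul_assoc Dh Dh J, hDh, diagonal_mul_diagonal, hJ]
    ext i j
    simp [Matrix.mul_apply, Matrix.diagonal_apply, hsum]
  set P : Matrix (Fin n) (Fin n) ℝ := 1 - (1 / (2 * (m : ℝ))) • (Dh * J * Dh) with hP
  have hPs : Pᵀ = P := by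
    rw [hP]
    simp only [transpose_sub, transpose_one, transpose_smul, transpose_mul, hDhs, hJs,
      Matrix.mul_assoc]
  have hPDJ : P * (Dh * J) = 0 := by
    rw [hP, sub_mul, one_mul, smul_mul_assoc]
    simp only [Matrix.mul_assoc]
    rw [hJDJ, mul_smul_comm, smul_smul, one_div, inv_mul_cancel₀ hmpos.ne', one_smul, sub_self]
  have hNLP : NL * P = NL := by
    have h0 : NL * (Dh * J * Dh) = 0 := by
      have : NL * (Dh * J * Dh) = Dhi * (L * ((Dhi * Dh) * J)) * Dh := by
        rw [hNL]; simp only [Matrix.mul_assoc]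
      rw [this, hDhiDh, one_mul, hLJ, mul_zero, zero_mul]
    rw [hP, mul_sub, mul_one, mul_smul_comm, h0, smul_zero, sub_zero]
  have hPNL : P * NL = NL := by
    have h := congrArg transpose hNLP
    rwa [transpose_mul, hPs, hNLs] at h
  have key : ∀ Q : Matrix (Fin n) (Fin n) ℝ, NL * Q = 0 → P * Q = 0 := by
    intro Q hQ
    have h1 : L * (Dhi * Q) = 0 := by
      have : L * (Dhi * Q) = Dh * (NL * Q) := by
        rw [hNL]; simp only [← Matrix.mul_assoc]; rw [hDhDhi, one_mul]
      rw [this, hQ, mul_zero]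
    have hconst : ∀ i k j, (Dhi * Q) i j = (Dhi * Q) k j := by
      intro i k j
      have h2 : G.lapMatrix ℝ *ᵥ (fun i => (Dhi * Q) i j) = 0 := by
        funext r
        have := congrFun (congrFun h1 r) j
        rw [hLlap] at this
        exact this
      exact (G.lapMatrix_mulVec_eq_zero_iff_forall_reachable.mp h2) i k (hG.preconnected i k)
    let z : Fin n := ⟨0, by omega⟩
    have h3 : Dhi * Q = J * diagonal (fun j => (Dhi * Q) z j) := by
      ext i j
      rw [hconst i z j, Matrix.mul_diagonal, hJ]
      simp
    have h4 : Q = Dh * J * diagonal (fun j => (Dhi * Q) z j) := by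
      rw [Matrix.mul_assoc, ← h3, ← Matrix.mul_assoc, hDhDhi, one_mul]
    rw [h4, ← Matrix.mul_assoc, hPDJ, zero_mul]
  have e1 : NLd * NL = P := by
    have h := key (1 - NLd * NL) (by rw [mul_sub, mul_one, ← Matrix.mul_assoc, hNLd1, sub_self])
    rw [mul_sub, mul_one, sub_eq_zero] at h
    have h' := congrArg transpose h
    rw [transpose_mul, hNLd4, hPs, Matrix.mul_assoc, hNLP] at h'
    exact h'.symm
  have e2 : NL * NLd = P := by
    have h := key (1 - NL * NLd) (by
      have h0 : (1 - NL * NLd) * NL = 0 := by rw [sub_mul, one_mul, hNLd1, sub_self]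
      have h0' := congrArg transpose h0
      rwa [transpose_mul, transpose_sub, transpose_one, hNLd3, hNLs, transpose_zero] at h0')
    rw [mul_sub, mul_one, sub_eq_zero, ← Matrix.mul_assoc, hPNL] at h
    exact h.symm
  have e3 : NL * (Dh * Ld * Dh) * NL = NL := by
    have : NL * (Dh * Ld * Dh) * NL = Dhi * (L * ((Dhi * Dh) * (Ld * ((Dh * Dhi) * L)))) * Dhi := by
      rw [hNL]; simp only [Matrix.mul_assoc]
    rw [this, hDhDhi, hDhiDh, one_mul, one_mul, ← Matrix.mul_assoc L, hLd1, hNL]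
  symm
  calc P * (Dh * Ld * Dh) * P = (NLd * NL) * (Dh * Ld * Dh) * (NL * NLd) := by rw [e1, e2]
    _ = NLd * (NL * (Dh * Ld * Dh) * NL) * NLd := by simp only [Matrix.mul_assoc]
    _ = NLd := by rw [e3, hNLd2]
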